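/- arXiv:1911.11850 — 2 statements merged into one kernel-verified Lean document; each statement's English description precedes it below -/
import Mathlib

section
/- If ε : ℕ → ZMod 2 satisfies the Adem constraints and ε(2) = 0, then ε(r) = 0 for every even natural number r ≥ 2. -/
/-!
The vanishing comes from the single relation with `s = 2` and `r = 2 * n - 1`, for even `n ≥ 4`.
The left side is zero because `ε 2 = 0`. On the right, `r ≤ 2 * i` forces `i ≥ n`, while for
`i > n` the factor `E ε (i + 1) (2 * n + 1 - i)` is zero: there are more parts than the total,
so some part is zero, and `ε 0 = 0`. The surviving term `i = n` is
`(n - 3) * ε n * E ε (n + 1) (n + 1)`, where `n - 3` is odd and `E ε (n + 1) (n + 1) = ε 1 ^ (n + 1)`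
equals `1`. Hence `ε n = 0`.
-/

/-- `E ε s d` is the sum over all `s`-tuples of naturals summing to `d` of the
products of the values of `ε`, in `ZMod 2`. -/
def E (ε : ℕ → ZMod 2) (s d : ℕ) : ZMod 2 :=
  ∑ f ∈ Finset.Nat.antidiagonalTuple s d, ∏ j, ε (f j)

/-- `ε` satisfies the Adem constraints encoding the Adem relations among the
Dyer-Lashof operations on `F₂[u]` with `Q^{2r} u = ε r • u^{r+1}`. -/
def AdemConstraints (ε : ℕ → ZMod 2) : Prop :=
  ε 0 = 0 ∧ ε 1 = 1 ∧ ∀ s r : ℕ, r > 2 * s →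
    ε s * E ε (s + 1) r =
      ∑ i ∈ (Finset.Icc (s + 1) (r - s - 1)).filter (fun i => r ≤ 2 * i),
        ((Nat.choose (i - s - 1) (2 * i - r) : ZMod 2) * ε i * E ε (i + 1) (r + s - i))

lemma E_eq_zero_of_lt {ε : ℕ → ZMod 2} (h0 : ε 0 = 0) {s d : ℕ} (h : d < s) : E ε s d = 0 := by
  refine Finset.sum_eq_zero fun f hf => ?_
  rw [Finset.Nat.mem_antidiagonalTuple] at hf
  by_contra hne
  have hpos : ∀ j ∈ Finset.univ, 1 ≤ f j := fun j hj =>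
    Nat.one_le_iff_ne_zero.2 fun hj0 => hne (Finset.prod_eq_zero hj (by rw [hj0, h0]))
  have := Finset.sum_le_sum hpos
  simp at this
  omega

lemma E_self {ε : ℕ → ZMod 2} (h0 : ε 0 = 0) (h1 : ε 1 = 1) (s : ℕ) : E ε s s = 1 := by
  unfold E
  rw [Finset.sum_eq_single (fun _ => 1)]
  · simp [h1]
  · intro f hf hne
    rw [Finset.Nat.mem_antidiagonalTuple] at hf
    by_contra hprod
    have hpos : ∀ j ∈ Finset.univ, 1 ≤ f j := fun j hj =>
      Nat.one_le_iff_ne_zero.2 fun hj0 => hprod (Finset.prod_eq_zero hj (by rw [hj0, h0]))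
    -- Parts at least `1` whose sum is the number of parts are all equal to `1`.
    have heq := (Finset.sum_eq_sum_iff_of_le hpos).1 (by simp [hf])
    exact hne (funext fun j => (heq j (Finset.mem_univ j)).symm)
  · intro h
    exact absurd (by simp [Finset.Nat.mem_antidiagonalTuple]) h

theorem stmt_1 (ε : ℕ → ZMod 2) (hε : AdemConstraints ε) (h2 : ε 2 = 0) :
    ∀ r : ℕ, 2 ≤ r → Even r → ε r = 0 := by
  obtain ⟨h0, h1, hA⟩ := hε
  intro n hn heven
  obtain rfl | hn4 : n = 2 ∨ 4 ≤ n := by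
    obtain ⟨k, rfl⟩ := heven
    omega
  · exact h2
  have h := hA 2 (2 * n - 1) (by omega)
  rw [h2, zero_mul, Finset.sum_eq_single n] at h
  · have hr : 2 * n - 1 + 2 - n = n + 1 := by omega
    have hc : 2 * n - (2 * n - 1) = 1 := by omega
    have hodd : ((n - 2 - 1 : ℕ) : ZMod 2) = 1 := by
      rw [ZMod.natCast_eq_one_iff_odd]
      obtain ⟨k, rfl⟩ := heven
      exact ⟨k - 2, by omega⟩
    rw [hr, hc, Nat.choose_one_right, hodd, E_self h0 h1] at h
    simpa using h.symm
  · intro i hi hne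
    simp only [Finset.mem_filter, Finset.mem_Icc] at hi
    rw [E_eq_zero_of_lt h0 (by omega), mul_zero]
  · intro hmem
    refine absurd ?_ hmem
    simp only [Finset.mem_filter, Finset.mem_Icc]
    omega
end

section
/- If ε : ℕ → ZMod 2 satisfies the Adem constraints and ε(2) = ε(3) = 0, then ε(r) = 0 for every natural number r ≥ 2 (so ε is the function which is 1 exactly at r = 1). -/
open PowerSeries

/-- The series `F / X`, where `F` is the generating series of `ε` with `ε 0 = 0`. -/
noncomputable def shiftSeries (ε : ℕ → ZMod 2) : PowerSeries (ZMod 2) :=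
  PowerSeries.mk fun n => ε (n + 1)

lemma E_eq_coeff (ε : ℕ → ZMod 2) (s d : ℕ) :
    E ε s d = coeff d ((PowerSeries.mk ε) ^ s) := by
  induction s generalizing d with
  | zero =>
    cases d <;> simp [E, coeff_one]
  | succ s ih =>
    rw [pow_succ', coeff_mul]
    simp only [coeff_mk, ← ih]
    simp only [E, Finset.mul_sum]
    rw [Finset.sum_sigma']
    refine Finset.sum_nbij' (fun f => ⟨(f 0, ∑ j, f (Fin.succ j)), Fin.tail f⟩)
      (fun x => Fin.cons x.1.1 x.2) ?_ ?_ ?_ ?_ ?_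
    · intro f hf
      rw [Finset.Nat.mem_antidiagonalTuple, Fin.sum_univ_succ] at hf
      simp [Finset.Nat.mem_antidiagonalTuple, hf, Fin.tail]
    · rintro ⟨⟨a, b⟩, g⟩ hx
      simp only [Finset.mem_sigma, Finset.Nat.mem_antidiagonalTuple] at hx
      simpa [Finset.Nat.mem_antidiagonalTuple, Fin.sum_univ_succ, hx.2] using
        Finset.HasAntidiagonal.mem_antidiagonal.1 hx.1
    · intro f _
      simp
    · rintro ⟨⟨a, b⟩, g⟩ hx
      simp only [Finset.mem_sigma, Finset.Nat.mem_antidiagonalTuple] at hx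
      simp [hx.2]
    · intro f _
      simp [Fin.prod_univ_succ, Fin.tail]

lemma E_eq_coeff_shift (ε : ℕ → ZMod 2) (h0 : ε 0 = 0) (s d : ℕ) :
    E ε s (d + s) = coeff d (shiftSeries ε ^ s) := by
  have hF : PowerSeries.mk ε = X * shiftSeries ε := by
    ext n
    cases n <;> simp [shiftSeries, h0, coeff_succ_X_mul]
  rw [E_eq_coeff, hF, mul_pow, coeff_X_pow_mul]

lemma E_eq_zero (ε : ℕ → ZMod 2) (h0 : ε 0 = 0) (s d : ℕ) (h : d < s) : E ε s d = 0 := by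
  have hF : PowerSeries.mk ε = X * shiftSeries ε := by
    ext n
    cases n <;> simp [shiftSeries, h0, coeff_succ_X_mul]
  rw [E_eq_coeff, hF, mul_pow, coeff_X_pow_mul', if_neg (by omega)]

/-- If `ε` is supported on `1 + qℕ` then its shifted series is `1 + X^q K`. -/
lemma exists_shift_eq (ε : ℕ → ZMod 2) (h1 : ε 1 = 1) (q : ℕ) (hq : 0 < q)
    (hP : ∀ i, ε i ≠ 0 → ∃ m, i = 1 + q * m) :
    ∃ K : PowerSeries (ZMod 2), shiftSeries ε = 1 + X ^ q * K ∧ constantCoeff K = ε (q + 1) := by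
  refine ⟨PowerSeries.mk fun n => ε (n + q + 1), ?_, by
    rw [← coeff_zero_eq_constantCoeff_apply, coeff_mk, zero_add]⟩
  ext n
  rw [map_add, coeff_X_pow_mul', coeff_one, shiftSeries, coeff_mk]
  by_cases hn : n = 0
  · subst hn
    simp [h1, hq.ne']
  · rw [if_neg hn, zero_add]
    split_ifs with h
    · rw [coeff_mk, Nat.sub_add_cancel h]
    · by_contra hne
      obtain ⟨m, hm⟩ := hP _ hne
      rcases Nat.eq_zero_or_pos m with rfl | hm0
      · omega
      · have := Nat.le_mul_of_pos_right q hm0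
        omega

lemma coeff_pow_of_eq {K : PowerSeries (ZMod 2)} {q : ℕ} (s n : ℕ)
    (hn : 0 < n) (hnq : n ≤ q) :
    coeff n ((1 + X ^ q * K) ^ s) = if n = q then (s : ZMod 2) * constantCoeff K else 0 := by
  induction s with
  | zero => simp [coeff_one, hn.ne']
  | succ s ih =>
    rw [pow_succ, mul_add, mul_one, map_add, ih, mul_left_comm, coeff_X_pow_mul']
    by_cases h : n = q
    · have hq : q ≠ 0 := by omega
      subst h
      simp [hq]
      ring
    · rw [if_neg h, if_neg (by omega), if_neg h, add_zero]

lemma coeff_key {K : PowerSeries (ZMod 2)} {k : ℕ} (hk : 2 ≤ k) :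
    coeff (2 * 2 ^ k) ((1 + X ^ (2 ^ k) * K) ^ (2 ^ k + 2)) = (constantCoeff K) ^ 2 := by
  have hq : 2 * 2 ^ k < 2 ^ k * 2 ^ k := by
    have : 2 ^ 2 ≤ 2 ^ k := Nat.pow_le_pow_right (by norm_num) hk
    nlinarith
  have : CharP (PowerSeries (ZMod 2)) 2 :=
    charP_of_injective_ringHom (f := (PowerSeries.C : ZMod 2 →+* _)) PowerSeries.C_injective 2
  have hq0 : (2 * 2 ^ k : ℕ) ≠ 0 := by positivity
  rw [pow_add, add_pow_char_pow, add_pow_char, one_pow, one_pow, mul_pow, mul_pow,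
    ← pow_mul, ← pow_mul, add_mul, one_mul, map_add, mul_assoc, coeff_X_pow_mul',
    if_neg (by omega), add_zero, map_add, mul_comm (2 ^ k) 2, coeff_X_pow_mul',
    if_pos le_rfl, coeff_one, if_neg hq0, zero_add, Nat.sub_self]
  simp

/-- The binomial coefficient `C(2^k n + 2^k - 1, 2^k)` has the parity of `n`, being
`C(n, 1)` by Lucas' theorem. -/
lemma choose_two_pow (k n : ℕ) :
    ((Nat.choose (2 ^ k * n + (2 ^ k - 1)) (2 ^ k) : ℕ) : ZMod 2) = n := by
  induction k with
  | zero => simp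
  | succ k ih =>
    rw [← ih, ZMod.natCast_eq_natCast_iff]
    have : Fact (Nat.Prime 2) := ⟨Nat.prime_two⟩
    have h := Choose.choose_modEq_choose_mod_mul_choose_div_nat (p := 2)
      (n := 2 ^ (k + 1) * n + (2 ^ (k + 1) - 1)) (k := 2 ^ (k + 1))
    have hpos : 0 < 2 ^ k := by positivity
    have e : 2 ^ (k + 1) * n + (2 ^ (k + 1) - 1) = 2 * (2 ^ k * n + (2 ^ k - 1)) + 1 := by
      rw [pow_succ, mul_comm (2 ^ k) 2, mul_assoc]
      omega
    have e1 : (2 * (2 ^ k * n + (2 ^ k - 1)) + 1) / 2 = 2 ^ k * n + (2 ^ k - 1) := by omega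
    have e2 : 2 ^ (k + 1) / 2 = 2 ^ k := by omega
    have e3 : 2 ^ (k + 1) % 2 = 0 := by omega
    rw [e, e1, e2, e3, Nat.choose_zero_right, one_mul] at h
    rw [e]
    exact h

/-- In the relation with `s = q + 1`, `r = 2i - q`, all terms except those of index `i` and
`i - q/2` vanish. -/
lemma term_eq_zero (ε : ℕ → ZMod 2) (h0 : ε 0 = 0) (h1 : ε 1 = 1) (q : ℕ) (hq : 0 < q)
    (hP : ∀ i, ε i ≠ 0 → ∃ m, i = 1 + q * m) (i j r : ℕ) (hr : r + q = 2 * i)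
    (hj : r ≤ 2 * j) (hji : j ≠ i) (hc : ε (q + 1) = 0 ∨ (r = 2 * j → ε j = 0)) :
    ε j * E ε (j + 1) (r + (q + 1) - j) = 0 := by
  by_cases hlt : r + (q + 1) - j < j + 1
  · rw [E_eq_zero ε h0 _ _ hlt, mul_zero]
  obtain ⟨K, hK, hKc⟩ := exists_shift_eq ε h1 q hq hP
  have e : r + (q + 1) - j = (2 * i - 2 * j) + (j + 1) := by omega
  rw [e, E_eq_coeff_shift ε h0, hK, coeff_pow_of_eq _ _ (by omega) (by omega)]
  split_ifs with h
  · rcases hc with hc | hc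
    · rw [hKc, hc, mul_zero, mul_zero]
    · rw [hc (by omega), zero_mul]
  · rw [mul_zero]

/-- For `q = 2^k ≥ 4`, the relation `s = q + 1`, `r = 3q + 2` forces `ε(q+1)² = 0`. -/
lemma eps_eq_zero (ε : ℕ → ZMod 2) (hε : AdemConstraints ε) (k : ℕ) (hk : 2 ≤ k)
    (hP : ∀ i, ε i ≠ 0 → ∃ m, i = 1 + 2 ^ k * m) : ε (2 ^ k + 1) = 0 := by
  obtain ⟨h0, h1, h⟩ := hε
  have hpos : 0 < 2 ^ k := by positivity
  have hrel := h (2 ^ k + 1) (3 * 2 ^ k + 2) (by omega)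
  rw [Finset.sum_eq_zero] at hrel
  · obtain ⟨K, hK, hKc⟩ := exists_shift_eq ε h1 (2 ^ k) hpos hP
    have e : 3 * 2 ^ k + 2 = 2 * 2 ^ k + (2 ^ k + 1 + 1) := by ring
    rw [e, E_eq_coeff_shift ε h0, hK, coeff_key hk, hKc] at hrel
    simpa using hrel
  · intro j hj
    rw [Finset.mem_filter, Finset.mem_Icc] at hj
    rw [mul_assoc, term_eq_zero ε h0 h1 (2 ^ k) hpos hP (2 * 2 ^ k + 1) j (3 * 2 ^ k + 2)
      (by ring) hj.2 (by omega) (Or.inr ?_), mul_zero]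
    -- `2j = 3q + 2` together with `j = 1 + q m` would give `2m = 3`
    intro hj2
    by_contra hne
    obtain ⟨m, hm⟩ := hP j hne
    have h3 : 2 ^ k * 3 = 2 ^ k * (2 * m) := by
      rw [mul_left_comm]
      omega
    have := Nat.eq_of_mul_eq_mul_left hpos h3
    omega

/-- Once `ε(q+1) = 0` with `q = 2^k`, the relations `s = q + 1`, `r = 2i - q` refine the support
condition from modulus `q` to modulus `2q`. -/
lemma support_step (ε : ℕ → ZMod 2) (hε : AdemConstraints ε) (k : ℕ)
    (hP : ∀ i, ε i ≠ 0 → ∃ m, i = 1 + 2 ^ k * m) (hc : ε (2 ^ k + 1) = 0) :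
    ∀ i, ε i ≠ 0 → ∃ m, i = 1 + 2 ^ (k + 1) * m := by
  obtain ⟨h0, h1, h⟩ := hε
  have hpos : 0 < 2 ^ k := by positivity
  intro i hi
  obtain ⟨m, hm⟩ := hP i hi
  rcases Nat.even_or_odd' m with ⟨n, rfl | rfl⟩
  · exact ⟨n, by rw [hm]; ring⟩
  exfalso
  rcases n with _ | n
  · apply hi
    rw [hm, ← hc]
    congr 1
    ring
  have hi' : i = 2 * (2 ^ k * n) + 3 * 2 ^ k + 1 := by rw [hm]; ring
  have hrel := h (2 ^ k + 1) (2 * i - 2 ^ k) (by omega)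
  rw [hc, zero_mul, Finset.sum_eq_single i] at hrel
  · have e1 : i - (2 ^ k + 1) - 1 = 2 ^ k * (2 * n + 1) + (2 ^ k - 1) := by
      have : 2 ^ k * (2 * n + 1) = 2 * (2 ^ k * n) + 2 ^ k := by ring
      omega
    have e2 : 2 * i - (2 * i - 2 ^ k) = 2 ^ k := by omega
    have e3 : 2 * i - 2 ^ k + (2 ^ k + 1) - i = 0 + (i + 1) := by omega
    have hodd : ((2 * n + 1 : ℕ) : ZMod 2) = 1 := by
      have : (2 : ZMod 2) = 0 := rfl
      push_cast
      rw [this, zero_mul, zero_add]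
    rw [e1, e2, e3, choose_two_pow, E_eq_coeff_shift ε h0, hodd] at hrel
    simp [shiftSeries, h1] at hrel
    exact hi hrel.symm
  · intro j hj hji
    rw [Finset.mem_filter] at hj
    rw [mul_assoc, term_eq_zero ε h0 h1 (2 ^ k) hpos hP i j (2 * i - 2 ^ k)
      (by omega) hj.2 hji (Or.inl hc), mul_zero]
  · intro hni
    exact absurd (Finset.mem_filter.2 ⟨Finset.mem_Icc.2 ⟨by omega, by omega⟩, by omega⟩) hni

theorem stmt_3 (ε : ℕ → ZMod 2) (hε : AdemConstraints ε) (h2 : ε 2 = 0)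
    (h3 : ε 3 = 0) : ∀ r : ℕ, 2 ≤ r → ε r = 0 := by
  have hP : ∀ k i, ε i ≠ 0 → ∃ m, i = 1 + 2 ^ k * m := by
    intro k
    induction k with
    | zero =>
      intro i hi
      have : i ≠ 0 := fun h => hi (h ▸ hε.1)
      exact ⟨i - 1, by omega⟩
    | succ k ih =>
      refine support_step ε hε k ih ?_
      match k, ih with
      | 0, _ => exact h2
      | 1, _ => exact h3
      | k + 2, ih => exact eps_eq_zero ε hε (k + 2) (by omega) ih
  intro r hr
  by_contra hne
  obtain ⟨m, hm⟩ := hP r r hne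
  have hlt : r < 2 ^ r := Nat.lt_two_pow_self
  rcases Nat.eq_zero_or_pos m with rfl | hm0
  · omega
  · have := Nat.le_mul_of_pos_right (2 ^ r) hm0
    omega
end
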